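/- There exists a real constant C such that for all m ≥ 1, |log₂ maxocc((01)^m) − (m·log₂((3 + √5)/2) − (1/2)·log₂ m)| ≤ C; that is, the subword entropy of (01)^m equals m·log₂((3+√5)/2) − (1/2)·log₂ m + O(1) as m → ∞. -/

import Mathlib

/-!
Let `φ` be the golden ratio, so that `(3 + √5) / 2 = φ ^ 2`.

*Exact value.* Let `w` be an alternating word of length `L`. Peeling off first letters and applying
Pascal's rule shows that a word of length `k` occurs at most `C(⌊(L + k) / 2⌋, k)` times in `w`, and
that the alternating word of length `k` with the same first letter attains this bound
(`occ_alt_le`, `occ_alt_alt`). Hence `maxocc ((01)^m)` is the maximum over `k` of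
`C(m + ⌊k / 2⌋, k)`.

*Binomial weights.* Put `n = m + ⌊k / 2⌋`. Then `C(n, k) φ ^ k / φ ^ (2 n)` is the probability that
a binomial variable with parameters `n` and `1 / φ` equals `k`, because `1 - 1 / φ = 1 / φ ^ 2`.
Since `2 n - k` is `2 m` or `2 m - 1`, the number `C(n, k)` is `φ ^ (2 m)` times this probability, up
to a bounded factor. It remains to know that the largest binomial probability has order
`1 / √n`. The mode is `⌊(n + 1) / φ⌋`. The upper bound holds since the weights stay above half
of the largest one on a window of length of order `√n` (`mode_upper`), the lower bound follows from
Chebyshev's inequality (`mode_lower`).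

*Hitting every `m`.* With `k` the mode for `n`, the quantity `n - ⌊k / 2⌋` starts at `0`, grows by at
most `1` when `n` grows by `1`, and is unbounded, so it takes every value `m` (`exists_mode`).
-/

open List Real

/-- `occ w u` is the number of occurrences of `u` as a subword (subsequence) of `w`,
i.e. the multiplicity of `u` among the `2^|w|` sublists of `w`. -/
def occ {α : Type*} [DecidableEq α] (w u : List α) : ℕ := w.sublists.count u

/-- `maxocc w` is the maximal number of occurrences of any subword of `w`. -/
noncomputable def maxocc {α : Type*} [DecidableEq α] (w : List α) : ℕ :=
  sSup {n : ℕ | ∃ u : List α, occ w u = n}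

/-- `rep v m` is the concatenation of `m` copies of the word `v`. -/
def rep {α : Type*} (v : List α) (m : ℕ) : List α := (List.replicate m v).flatten

/-! ### Occurrences in alternating words -/

/-- The alternating word of length `L` over `{0, 1}` with first letter `a`. -/
def alt : Fin 2 → ℕ → List (Fin 2)
  | _, 0 => []
  | a, L + 1 => a :: alt (a + 1) L

lemma occ_nil_right {α : Type*} [DecidableEq α] (w : List α) : occ w [] = 1 := by
  unfold occ
  rw [(List.sublists_perm_sublists' w).count_eq]
  induction w with
  | nil => simp
  | cons a w ih =>
    rw [List.sublists'_cons, List.count_append, ih]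
    simp [List.count_eq_zero]

lemma occ_nil_cons {α : Type*} [DecidableEq α] (b : α) (u : List α) : occ [] (b :: u) = 0 := by
  simp [occ]

lemma occ_cons_same {α : Type*} [DecidableEq α] (a : α) (w u : List α) :
    occ (a :: w) (a :: u) = occ w (a :: u) + occ w u := by
  unfold occ
  simp only [(List.sublists_perm_sublists' _).count_eq]
  rw [List.sublists'_cons, List.count_append,
    List.count_map_of_injective _ _ List.cons_injective]

lemma occ_cons_ne {α : Type*} [DecidableEq α] {a b : α} (h : a ≠ b) (w u : List α) :
    occ (a :: w) (b :: u) = occ w (b :: u) := by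
  unfold occ
  simp only [(List.sublists_perm_sublists' _).count_eq]
  rw [List.sublists'_cons, List.count_append, Nat.add_eq_left, List.count_eq_zero]
  simp [h]

lemma fin_two_add_ne (a : Fin 2) : a + 1 ≠ a := by
  revert a; decide

lemma fin_two_add_add (a : Fin 2) : a + 1 + 1 = a := by
  revert a; decide

lemma occ_alt_le (L : ℕ) : ∀ (a : Fin 2) (u : List (Fin 2)),
    occ (alt a L) u ≤ ((L + u.length) / 2).choose u.length := by
  induction L using Nat.strong_induction_on with
  | _ L ih =>
    intro a u
    rcases u with _ | ⟨b, u⟩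
    · simp [occ_nil_right]
    rcases L with _ | L
    · simp [alt, occ_nil_cons]
    rw [alt]
    by_cases hab : a = b
    · subst hab
      rw [occ_cons_same, List.length_cons]
      have h1 := ih L (by omega) (a + 1) u
      -- The first letter of the remaining word differs from `a`, so one more letter can be dropped.
      have h2 : occ (alt (a + 1) L) (a :: u) ≤ ((L + u.length) / 2).choose (u.length + 1) := by
        rcases L with _ | L
        · simp [alt, occ_nil_cons]
        · rw [alt, occ_cons_ne (fin_two_add_ne a)]
          have h := ih L (by omega) (a + 1 + 1) (a :: u)
          rw [List.length_cons] at h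
          rwa [show L + 1 + u.length = L + (u.length + 1) by ring]
      rw [show (L + 1 + (u.length + 1)) / 2 = (L + u.length) / 2 + 1 by omega,
        Nat.choose_succ_succ']
      omega
    · rw [occ_cons_ne hab]
      refine (ih L (by omega) (a + 1) (b :: u)).trans (Nat.choose_le_choose _ ?_)
      omega

lemma occ_alt_alt (L : ℕ) : ∀ (a : Fin 2) (k : ℕ),
    occ (alt a L) (alt a k) = ((L + k) / 2).choose k := by
  induction L using Nat.strong_induction_on with
  | _ L ih =>
    intro a k
    rcases k with _ | k
    · simp [alt, occ_nil_right]
    rcases L with _ | L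
    · rw [Nat.choose_eq_zero_of_lt (by omega)]
      simp [alt, occ_nil_cons]
    have h1 := ih L (by omega) (a + 1) k
    have h2 : occ (alt (a + 1) L) (alt a (k + 1)) = ((L + k) / 2).choose (k + 1) := by
      rcases L with _ | L
      · rw [Nat.choose_eq_zero_of_lt (by omega)]
        simp [alt, occ_nil_cons]
      · have h := ih L (by omega) a (k + 1)
        rw [show L + 1 + k = L + (k + 1) by ring, ← h, alt, fin_two_add_add]
        exact occ_cons_ne (fin_two_add_ne a) _ _
    rw [show (L + 1 + (k + 1)) / 2 = (L + k) / 2 + 1 by omega, Nat.choose_succ_succ, ← h1, ← h2,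
      alt, alt, occ_cons_same, add_comm]

lemma rep_eq_alt (m : ℕ) : rep ([0, 1] : List (Fin 2)) m = alt 0 (2 * m) := by
  induction m with
  | zero => rfl
  | succ m ih =>
    rw [show 2 * (m + 1) = 2 * m + 1 + 1 by ring, alt, alt, fin_two_add_add, ← ih]
    rfl

lemma occ_rep_le (m : ℕ) (u : List (Fin 2)) :
    occ (rep [0, 1] m) u ≤ (m + u.length / 2).choose u.length := by
  have h := occ_alt_le (2 * m) 0 u
  rwa [← rep_eq_alt, show (2 * m + u.length) / 2 = m + u.length / 2 by omega] at h

lemma choose_le_maxocc (m k : ℕ) :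
    (m + k / 2).choose k ≤ maxocc (rep ([0, 1] : List (Fin 2)) m) := by
  refine le_csSup ?_ ⟨alt 0 k, ?_⟩
  · refine ⟨(rep ([0, 1] : List (Fin 2)) m).sublists.length, ?_⟩
    rintro _ ⟨u, rfl⟩
    exact List.count_le_length
  · rw [rep_eq_alt, occ_alt_alt, show (2 * m + k) / 2 = m + k / 2 by omega]

lemma maxocc_attained (m : ℕ) :
    ∃ k, maxocc (rep ([0, 1] : List (Fin 2)) m) ≤ (m + k / 2).choose k := by
  have hmem : maxocc (rep ([0, 1] : List (Fin 2)) m) ∈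
      {n : ℕ | ∃ u, occ (rep ([0, 1] : List (Fin 2)) m) u = n} := by
    refine Nat.sSup_mem ⟨_, [], rfl⟩ ⟨(rep ([0, 1] : List (Fin 2)) m).sublists.length, ?_⟩
    rintro _ ⟨u, rfl⟩
    exact List.count_le_length
  obtain ⟨u, hu⟩ := hmem
  exact ⟨u.length, hu ▸ occ_rep_le m u⟩

/-! ### The largest binomial weight -/

local notation "φ" => Real.goldenRatio

/-- The unnormalised weight of `k` under the binomial law with parameters `n` and `1 / φ`; the
weights sum to `φ ^ (2 * n)`. -/
noncomputable def wt (n k : ℕ) : ℝ := (n.choose k : ℝ) * φ ^ k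

/-- The mode `⌊(n + 1) / φ⌋` of the binomial law with parameters `n` and `1 / φ`. -/
noncomputable def mode (n : ℕ) : ℕ := ⌊((n : ℝ) + 1) / φ⌋₊

lemma wt_nonneg (n k : ℕ) : 0 ≤ wt n k :=
  mul_nonneg (Nat.cast_nonneg _) (pow_nonneg Real.goldenRatio_pos.le _)

lemma wt_succ (n k : ℕ) : wt n (k + 1) * (k + 1) = wt n k * ((n - k) * φ) := by
  unfold wt
  rcases le_or_gt k n with h | h
  · have h1 := Nat.choose_succ_right_eq n k
    have h2 : (n.choose (k + 1) : ℝ) * (k + 1) = n.choose k * (n - k) := by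
      rw [← Nat.cast_sub h]; exact_mod_cast h1
    rw [pow_succ]
    linear_combination φ ^ k * φ * h2
  · simp [Nat.choose_eq_zero_of_lt h, Nat.choose_eq_zero_of_lt (show n < k + 1 by omega)]

/-- The ratio of consecutive weights, written relative to the threshold `(n + 1) / φ`. -/
lemma wt_step (n k : ℕ) :
    wt n (k + 1) * (k + 1) = wt n k * ((k + 1) - φ ^ 2 * ((k + 1) - (n + 1) / φ)) := by
  rw [wt_succ]
  have h0 : φ ≠ 0 := Real.goldenRatio_ne_zero
  have h : φ ^ 2 * ((n + 1) / φ) = (n + 1) * φ := by field_simp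
  rw [mul_sub (φ ^ 2), h, Real.goldenRatio_sq]
  ring

lemma sum_wt (n : ℕ) : ∑ k ∈ Finset.range (n + 1), wt n k = (φ ^ 2) ^ n := by
  rw [Real.goldenRatio_sq, add_pow]
  refine Finset.sum_congr rfl fun k _ => ?_
  simp [wt, mul_comm]

lemma sum_wt_le (n : ℕ) (s : Finset ℕ) : ∑ k ∈ s, wt n k ≤ (φ ^ 2) ^ n := by
  have h : ∑ k ∈ s, wt n k ≤ ∑ k ∈ s ∪ Finset.range (n + 1), wt n k :=
    Finset.sum_le_sum_of_subset_of_nonneg Finset.subset_union_left fun k _ _ => wt_nonneg n k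
  refine h.trans_eq ?_
  rw [← sum_wt]
  refine (Finset.sum_subset Finset.subset_union_right fun k _ hk => ?_).symm
  simp only [Finset.mem_range, not_lt] at hk
  simp [wt, Nat.choose_eq_zero_of_lt (show n < k by omega)]

lemma wt_le_succ {n k : ℕ} (h : k + 1 ≤ mode n) : wt n k ≤ wt n (k + 1) := by
  have hT : ((k : ℝ) + 1) ≤ (n + 1) / φ := by
    have h0 : (0 : ℝ) ≤ (n + 1) / φ := div_nonneg (by positivity) Real.goldenRatio_pos.le
    have := (Nat.le_floor_iff h0).1 h
    exact_mod_cast this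
  have hs := wt_step n k
  have hk : (0 : ℝ) < k + 1 := by positivity
  have h1 : 0 ≤ wt n k * (φ ^ 2 * ((n + 1) / φ - (k + 1))) :=
    mul_nonneg (wt_nonneg _ _) (mul_nonneg (sq_nonneg _) (by linarith))
  refine le_of_mul_le_mul_right ?_ hk
  linarith

lemma wt_succ_le {n k : ℕ} (h : mode n ≤ k) : wt n (k + 1) ≤ wt n k := by
  have hT : ((n : ℝ) + 1) / φ < k + 1 := by
    have := (Nat.floor_lt' (n := k + 1) (a := ((n : ℝ) + 1) / φ) (by omega)).1
      (by unfold mode at h; omega)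
    exact_mod_cast this
  have hs := wt_step n k
  have hk : (0 : ℝ) < k + 1 := by positivity
  have h1 : 0 ≤ wt n k * (φ ^ 2 * ((k + 1) - (n + 1) / φ)) :=
    mul_nonneg (wt_nonneg _ _) (mul_nonneg (sq_nonneg _) (by linarith))
  refine le_of_mul_le_mul_right ?_ hk
  linarith

lemma wt_le_mode (n k : ℕ) : wt n k ≤ wt n (mode n) := by
  rcases le_total k (mode n) with h | h
  · exact Nat.decreasingInduction' (P := fun j => wt n j ≤ wt n (mode n))
      (fun j hj _ ih => (wt_le_succ hj).trans ih) h le_rfl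
  · induction k, h using Nat.le_induction with
    | base => exact le_rfl
    | succ k hk ih => exact (wt_succ_le hk).trans ih

lemma goldenRatio_bounds : 1.6 < φ ∧ φ < 1.62 := by
  have h5 : √5 ^ 2 = 5 := Real.sq_sqrt (by norm_num)
  have h0 : 0 ≤ √5 := Real.sqrt_nonneg 5
  unfold Real.goldenRatio
  constructor <;> nlinarith

/-- Moving `i` steps beyond the mode loses at most a fraction `O(i ^ 2 / n)` of the weight. -/
lemma wt_mode_add (n i : ℕ) :
    wt n (mode n) * (1 - φ ^ 3 / (n + 1) * i ^ 2) ≤ wt n (mode n + i) := by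
  have hφ := Real.goldenRatio_pos
  induction i with
  | zero => simp
  | succ i ih =>
    set T : ℝ := (n + 1) / φ with hTdef
    have hTpos : 0 < T := by positivity
    have hk : (mode n : ℝ) ≤ T := Nat.floor_le hTpos.le
    have hk' : T < mode n + 1 := Nat.lt_floor_add_one T
    have hs := wt_step n (mode n + i)
    rw [← hTdef] at hs
    push_cast at hs
    set M := wt n (mode n) with hM
    have hM0 : 0 ≤ M := wt_nonneg _ _
    have hle : wt n (mode n + i) ≤ M := wt_le_mode _ _
    have h0 := wt_nonneg n (mode n + i)
    set x : ℝ := mode n + i + 1 with hx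
    have hi : (0 : ℝ) ≤ i := Nat.cast_nonneg i
    have hxT : T ≤ x := by rw [hx]; linarith
    have hx0 : 0 < x := by linarith
    have hstep : wt n (mode n + i) - wt n (mode n + (i + 1)) ≤ M * (φ ^ 2 / T * (i + 1)) := by
      have e : wt n (mode n + i) - wt n (mode n + (i + 1))
          = wt n (mode n + i) * (φ ^ 2 / x * (x - T)) := by
        rw [← add_assoc, eq_div_of_mul_eq hx0.ne' hs]
        linear_combination (-wt n (mode n + i)) * div_self hx0.ne'
      rw [e]
      have hxx : x - T ≤ i + 1 := by rw [hx]; linarith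
      have hxx0 : 0 ≤ x - T := by linarith
      gcongr
    have hc : φ ^ 2 / T = φ ^ 3 / (n + 1) := by rw [hTdef]; field_simp
    rw [hc] at hstep
    have hcp : 0 ≤ M * (φ ^ 3 / (n + 1)) * i := by positivity
    push_cast
    nlinarith

/-- The weights `wt n (mode n + i)` with `i ≤ √(n + 1) / 3` are at least half of the largest weight,
while their sum is at most `φ ^ (2 * n)`. -/
lemma mode_upper (n k : ℕ) : wt n k * √(n + 1) ≤ 6 * (φ ^ 2) ^ n := by
  refine (mul_le_mul_of_nonneg_right (wt_le_mode n k) (Real.sqrt_nonneg _)).trans ?_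
  obtain ⟨-, hφ⟩ := goldenRatio_bounds
  have hφ0 := Real.goldenRatio_pos
  set M := wt n (mode n) with hM
  have hM0 : 0 ≤ M := wt_nonneg _ _
  set r := √((n : ℝ) + 1) with hr
  have hr0 : 0 < r := by positivity
  have hr2 : r ^ 2 = n + 1 := Real.sq_sqrt (by positivity)
  set I := ⌊r / 3⌋₊ with hI
  have hI1 : (I : ℝ) ≤ r / 3 := Nat.floor_le (by positivity)
  have hI2 : r / 3 < I + 1 := Nat.lt_floor_add_one _
  have hhalf : ∀ i ∈ Finset.range (I + 1), M / 2 ≤ wt n (mode n + i) := by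
    intro i hi
    have hiI : (i : ℝ) ≤ I := by
      exact_mod_cast Nat.lt_succ_iff.1 (Finset.mem_range.1 hi)
    refine le_trans ?_ (wt_mode_add n i)
    have h3 : φ ^ 3 ≤ 4.5 := by
      calc φ ^ 3 ≤ 1.62 ^ 3 := by gcongr
        _ ≤ 4.5 := by norm_num
    have hi2 : (i : ℝ) ^ 2 ≤ (r / 3) ^ 2 := by
      have : (0 : ℝ) ≤ i := Nat.cast_nonneg i
      gcongr; linarith
    have hle : φ ^ 3 / (n + 1) * (i : ℝ) ^ 2 ≤ 1 / 2 := by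
      rw [← hr2]
      calc φ ^ 3 / r ^ 2 * (i : ℝ) ^ 2 ≤ 4.5 / r ^ 2 * (r / 3) ^ 2 := by gcongr
        _ = 1 / 2 := by field_simp; norm_num
    nlinarith
  have hsum : ((I : ℝ) + 1) * (M / 2) ≤ (φ ^ 2) ^ n := by
    calc ((I : ℝ) + 1) * (M / 2) = ∑ _i ∈ Finset.range (I + 1), M / 2 := by simp
      _ ≤ ∑ i ∈ Finset.range (I + 1), wt n (mode n + i) := Finset.sum_le_sum hhalf
      _ = ∑ k ∈ (Finset.range (I + 1)).map (addLeftEmbedding (mode n)), wt n k := by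
          rw [Finset.sum_map]; rfl
      _ ≤ (φ ^ 2) ^ n := sum_wt_le _ _
  nlinarith

/-- The variance of the binomial law with parameters `n` and `1 / φ`, as `1 - 1 / φ = 1 / φ ^ 2`. -/
lemma sum_wt_variance (n : ℕ) :
    ∑ k ∈ Finset.range (n + 1), (n / φ - k) ^ 2 * wt n k = n / φ ^ 3 * (φ ^ 2) ^ n := by
  have h0 : φ ≠ 0 := Real.goldenRatio_ne_zero
  have hq : 1 - 1 / φ = 1 / φ ^ 2 := by
    rw [eq_div_iff (pow_ne_zero 2 h0), sub_mul, sq, one_div, inv_mul_cancel_left₀ h0]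
    linarith [Real.goldenRatio_sq]
  have hv := congrArg (Polynomial.eval (1 / φ)) (bernsteinPolynomial.variance ℝ n)
  simp only [Polynomial.eval_finsetSum, bernsteinPolynomial, Polynomial.eval_mul,
    Polynomial.eval_pow, Polynomial.eval_sub, Polynomial.eval_X, Polynomial.eval_one,
    Polynomial.eval_natCast, nsmul_eq_mul, hq] at hv
  have hr : (n : ℝ) / φ ^ 3 = n * (1 / φ) * (1 / φ ^ 2) := by field_simp
  rw [hr, ← hv, Finset.sum_mul]
  refine Finset.sum_congr rfl fun k hk => ?_
  have hkn : k ≤ n := Nat.lt_succ_iff.1 (Finset.mem_range.1 hk)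
  obtain ⟨d, rfl⟩ := Nat.exists_eq_add_of_le hkn
  have hpow : ∀ g : ℝ, g ≠ 0 → g ^ k = (1 / g) ^ k * (1 / g ^ 2) ^ d * (g ^ 2) ^ (k + d) := by
    intro g hg
    simp only [pow_add, one_div, inv_pow, ← pow_mul]
    field_simp
    ring
  rw [wt, hpow φ h0, Nat.add_sub_cancel_left]
  ring

/-- Chebyshev: at least three quarters of the total weight `φ ^ (2 * n)` lies within `√n` of the
mean, that is, on at most `3 √n` integers. -/
lemma mode_lower (n : ℕ) (hn : 1 ≤ n) : (φ ^ 2) ^ n ≤ 4 * √n * wt n (mode n) := by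
  obtain ⟨hφ, -⟩ := goldenRatio_bounds
  have hφ0 := Real.goldenRatio_pos
  set M := wt n (mode n) with hM
  have hM0 : 0 ≤ M := wt_nonneg _ _
  have hn1 : (1 : ℝ) ≤ n := by exact_mod_cast hn
  set r := √(n : ℝ) with hr
  have hr2 : r ^ 2 = n := Real.sq_sqrt (by positivity)
  have hr1 : 1 ≤ r := Real.one_le_sqrt.2 hn1
  set s := Finset.Icc ⌈n / φ - r⌉₊ ⌊n / φ + r⌋₊ with hs
  have hcard : (s.card : ℝ) ≤ 3 * r := by
    rw [hs, Nat.card_Icc]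
    rcases le_total ⌈n / φ - r⌉₊ (⌊n / φ + r⌋₊ + 1) with h | h
    · rw [Nat.cast_sub h]
      have h1 := Nat.le_ceil (n / φ - r)
      have h2 := Nat.floor_le (show 0 ≤ n / φ + r by positivity)
      push_cast
      linarith
    · rw [Nat.sub_eq_zero_of_le h]
      push_cast; linarith
  have hterm : ∀ k ∈ Finset.range (n + 1),
      wt n k - (n / φ - k) ^ 2 * wt n k / n ≤ if k ∈ s then M else 0 := by
    intro k _
    have hk0 := wt_nonneg n k
    have hsq : 0 ≤ (n / φ - k) ^ 2 * wt n k / n := by positivity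
    split_ifs with h
    · have := wt_le_mode n k
      linarith
    · have hfar : (n : ℝ) ≤ (n / φ - k) ^ 2 := by
        by_contra! hlt
        rw [← hr2] at hlt
        have ha := abs_lt.1 (abs_lt_of_sq_lt_sq hlt (by linarith))
        rw [hr2] at ha
        apply h
        rw [hs, Finset.mem_Icc]
        exact ⟨Nat.ceil_le.2 (by linarith [ha.2]), Nat.le_floor (by linarith [ha.1])⟩
      have : wt n k ≤ (n / φ - k) ^ 2 * wt n k / n := by
        rw [le_div_iff₀ (by linarith), mul_comm]
        gcongr
      linarith
  have hsum := Finset.sum_le_sum hterm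
  rw [Finset.sum_sub_distrib, sum_wt, ← Finset.sum_div, sum_wt_variance, ← Finset.sum_filter,
    Finset.sum_const, nsmul_eq_mul] at hsum
  have hc : (((Finset.range (n + 1)).filter (· ∈ s)).card : ℝ) ≤ 3 * r := by
    refine le_trans ?_ hcard
    exact_mod_cast Finset.card_le_card fun x hx => (Finset.mem_filter.1 hx).2
  have hc' := mul_le_mul_of_nonneg_right hc hM0
  have hvar : n / φ ^ 3 * (φ ^ 2) ^ n / n ≤ (1 / 4) * (φ ^ 2) ^ n := by
    have h3 : 4 ≤ φ ^ 3 := by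
      calc (4 : ℝ) ≤ 1.6 ^ 3 := by norm_num
        _ ≤ φ ^ 3 := by gcongr
    have h4 : 1 / φ ^ 3 ≤ 1 / 4 := by gcongr
    calc n / φ ^ 3 * (φ ^ 2) ^ n / n = 1 / φ ^ 3 * (φ ^ 2) ^ n := by field_simp
      _ ≤ _ := by gcongr
  linarith

/-! ### Matching `n` with `m` -/

lemma mode_le (n : ℕ) : mode n ≤ n := by
  obtain ⟨hφ, -⟩ := goldenRatio_bounds
  have h : ((n : ℝ) + 1) / φ < n + 1 := div_lt_self (by positivity) (by linarith)
  have := (Nat.floor_lt' (n := n + 1) (a := ((n : ℝ) + 1) / φ) (by omega)).2 (by exact_mod_cast h)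
  unfold mode
  omega

lemma mode_mono (n : ℕ) : mode n ≤ mode (n + 1) := by
  have := Real.goldenRatio_pos
  unfold mode
  gcongr
  omega

lemma exists_mode (m : ℕ) (hm : 1 ≤ m) : ∃ n, n = m + mode n / 2 := by
  have hex : ∃ n, m + mode n / 2 ≤ n := ⟨2 * m, by have := mode_le (2 * m); omega⟩
  classical
  refine ⟨Nat.find hex, ?_⟩
  have hspec := Nat.find_spec hex
  obtain ⟨n, hn⟩ : ∃ n, Nat.find hex = n + 1 := Nat.exists_eq_succ_of_ne_zero (by omega)
  have hmin := Nat.find_min hex (m := n) (by omega)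
  rw [hn] at hspec ⊢
  have := mode_mono n
  omega

lemma maxocc_upper (m : ℕ) :
    (maxocc (rep ([0, 1] : List (Fin 2)) m) : ℝ) * √m ≤ 6 * (φ ^ 2) ^ m := by
  obtain ⟨k, hk⟩ := maxocc_attained m
  have hφ0 := Real.goldenRatio_pos
  have hk' : (maxocc (rep ([0, 1] : List (Fin 2)) m) : ℝ) ≤ (m + k / 2).choose k := by
    exact_mod_cast hk
  have h := mode_upper (m + k / 2) k
  have hs : √(m : ℝ) ≤ √(((m + k / 2 : ℕ) : ℝ) + 1) := by
    apply Real.sqrt_le_sqrt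
    push_cast
    have : (0 : ℝ) ≤ ((k / 2 : ℕ) : ℝ) := Nat.cast_nonneg _
    linarith
  have hp : (φ ^ 2) ^ (m + k / 2) ≤ (φ ^ 2) ^ m * φ ^ k := by
    rw [pow_add, ← pow_mul φ 2 (k / 2)]
    gcongr
    · exact Real.one_lt_goldenRatio.le
    · omega
  have hkpos : 0 < φ ^ k := by positivity
  refine le_of_mul_le_mul_right ?_ hkpos
  calc (maxocc (rep ([0, 1] : List (Fin 2)) m) : ℝ) * √m * φ ^ k
      ≤ (m + k / 2).choose k * √(((m + k / 2 : ℕ) : ℝ) + 1) * φ ^ k := by gcongr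
    _ = wt (m + k / 2) k * √(((m + k / 2 : ℕ) : ℝ) + 1) := by rw [wt]; ring
    _ ≤ 6 * (φ ^ 2) ^ (m + k / 2) := h
    _ ≤ 6 * ((φ ^ 2) ^ m * φ ^ k) := by gcongr
    _ = _ := by ring

lemma maxocc_lower (m : ℕ) (hm : 1 ≤ m) :
    (φ ^ 2) ^ m ≤ 16 * ((maxocc (rep ([0, 1] : List (Fin 2)) m) : ℝ) * √m) := by
  obtain ⟨n, hn⟩ := exists_mode m hm
  obtain ⟨-, hφ⟩ := goldenRatio_bounds
  have hφ0 := Real.goldenRatio_pos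
  have h := mode_lower n (by omega)
  have hle := mode_le n
  generalize mode n = k at *
  have hk : ((n.choose k : ℕ) : ℝ) ≤ maxocc (rep ([0, 1] : List (Fin 2)) m) := by
    rw [hn]; exact_mod_cast choose_le_maxocc m k
  have hs : √(n : ℝ) ≤ 2 * √m := by
    rw [show (2 : ℝ) = √4 by rw [show (4 : ℝ) = 2 ^ 2 by norm_num]; simp,
      ← Real.sqrt_mul (by norm_num)]
    apply Real.sqrt_le_sqrt
    exact_mod_cast (show n ≤ 4 * m by omega)
  have hp : (φ ^ 2) ^ m * φ ^ k ≤ φ * (φ ^ 2) ^ n := by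
    rw [hn, pow_add, ← pow_mul φ 2 (k / 2), mul_left_comm, ← pow_succ']
    gcongr
    · exact Real.one_lt_goldenRatio.le
    · omega
  have hkpos : 0 < φ ^ k := by positivity
  refine le_of_mul_le_mul_right ?_ hkpos
  calc (φ ^ 2) ^ m * φ ^ k ≤ φ * (φ ^ 2) ^ n := hp
    _ ≤ 2 * (4 * √n * wt n k) := by gcongr; linarith
    _ = 8 * (n.choose k * √n) * φ ^ k := by rw [wt]; ring
    _ ≤ 8 * (maxocc (rep ([0, 1] : List (Fin 2)) m) * (2 * √m)) * φ ^ k := by gcongr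
    _ = _ := by ring

theorem stmt_14 :
    ∃ C : ℝ, ∀ m : ℕ, 1 ≤ m →
      |Real.logb 2 (maxocc (rep ([0, 1] : List (Fin 2)) m)) -
        ((m : ℝ) * Real.logb 2 ((3 + Real.sqrt 5) / 2) - (1 / 2) * Real.logb 2 m)| ≤ C := by
  refine ⟨4, fun m hm => ?_⟩
  have hφ0 := Real.goldenRatio_pos
  have hsq : (3 + √5) / 2 = φ ^ 2 := by
    rw [Real.goldenRatio_sq, Real.goldenRatio]; ring
  have hm0 : (0 : ℝ) < m := by exact_mod_cast hm
  have hu := maxocc_upper m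
  have hl := maxocc_lower m hm
  set A : ℝ := (maxocc (rep ([0, 1] : List (Fin 2)) m) : ℝ) with hA
  have hP : 0 < (φ ^ 2) ^ m := by positivity
  have hAs : 0 < A * √m := by linarith
  have hA0 : A ≠ 0 := left_ne_zero_of_mul hAs.ne'
  have hexp : Real.logb 2 A - (m * Real.logb 2 ((3 + √5) / 2) - 1 / 2 * Real.logb 2 m)
      = Real.logb 2 (A * √m) - Real.logb 2 ((φ ^ 2) ^ m) := by
    rw [hsq, Real.logb_mul hA0 (by positivity), Real.logb_pow _ (φ ^ 2) m, Real.sqrt_eq_rpow,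
      Real.logb_rpow_eq_mul_logb_of_pos hm0]
    ring
  have h16 : Real.logb 2 16 = 4 := by
    rw [show (16 : ℝ) = 2 ^ (4 : ℝ) by norm_num]
    exact Real.logb_rpow (by norm_num) (by norm_num)
  have key1 : Real.logb 2 (A * √m) ≤ 4 + Real.logb 2 ((φ ^ 2) ^ m) := by
    rw [← h16, ← Real.logb_mul (by norm_num) hP.ne']
    exact Real.logb_le_logb_of_le (by norm_num) hAs (by linarith)
  have key2 : Real.logb 2 ((φ ^ 2) ^ m) ≤ 4 + Real.logb 2 (A * √m) := by
    rw [← h16, ← Real.logb_mul (by norm_num) hAs.ne']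
    exact Real.logb_le_logb_of_le (by norm_num) hP hl
  rw [hexp, abs_le]
  constructor <;> linarith
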